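/- Let ν be a probability measure on [0,1] and let G_n, n ≥ 1, be the random graphs of Construction 2. Then for every finite simple graph F with vertex set {1,…,m}, t(F, G_n) → t(F,W) in probability as n → ∞, where t(F,W) = ∫_{S^m} ∏_{{i,j}∈E(F)} W(x_i,x_j) dμ_ν(x₁)⋯dμ_ν(x_m) is the homomorphism density of F in the kernel W on (S, μ_ν). -/

import Mathlib

open MeasureTheory Filter
open scoped ENNReal

/-- Lebesgue measure on `[0,1]`, as a (probability) measure on `ℝ`. -/
noncomputable def unif01 : Measure ℝ := volume.restrict (Set.Icc (0 : ℝ) 1)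

/-- The measure `μ_ν = ν × λ` on `S = [0,1]²`. -/
noncomputable def muNu (ν : Measure ℝ) : Measure (ℝ × ℝ) := ν.prod unif01

/-- The kernel `W` on `S = [0,1]²`:
`W((s₁,t₁),(s₂,t₂)) = s₂` if `t₁ < t₂`, `s₁` if `t₁ > t₂`, and `0` if `t₁ = t₂`. -/
noncomputable def Wker : ℝ × ℝ → ℝ × ℝ → ℝ := fun x y =>
  if x.2 < y.2 then y.1 else if y.2 < x.2 then x.1 else 0

/-- `∏_{{i,j} ∈ E(F)} W(x_i, x_j)`. -/
noncomputable def edgeProd {m : ℕ} {α : Type*} (F : SimpleGraph (Fin m))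
    [DecidableRel F.Adj] (W : α → α → ℝ) (x : Fin m → α) : ℝ :=
  ∏ p ∈ Finset.univ.filter (fun p : Fin m × Fin m => p.1 < p.2 ∧ F.Adj p.1 p.2),
    W (x p.1) (x p.2)

/-- Sample space measure for Construction 2 on `n` vertices:
`θ₁,…,θ_n` i.i.d. with law `ν` and `(U_{ij})` i.i.d. `Uniform[0,1]`, all independent. -/
noncomputable def con2Measure (n : ℕ) (ν : Measure ℝ) :
    Measure ((Fin n → ℝ) × (Fin n × Fin n → ℝ)) :=
  (Measure.pi fun _ => ν).prod (Measure.pi fun _ => unif01)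

/-- The Construction 2 graph `G_n`: for `i < j`, the edge `{i,j}` is present iff
`U_{ij} < θ_j`. -/
def con2Graph {n : ℕ} (ω : (Fin n → ℝ) × (Fin n × Fin n → ℝ)) : SimpleGraph (Fin n) where
  Adj i j := (i < j ∧ ω.2 (i, j) < ω.1 j) ∨ (j < i ∧ ω.2 (j, i) < ω.1 i)
  symm := ⟨fun _ _ h => h.symm⟩
  loopless := ⟨fun i h => by rcases h with ⟨h, -⟩ | ⟨h, -⟩ <;> exact absurd h (lt_irrefl i)⟩

/-- `n(F,G)`: the number of homomorphisms `F → G`. -/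
noncomputable def homCount {m n : ℕ} (F : SimpleGraph (Fin m)) (G : SimpleGraph (Fin n)) : ℕ :=
  Nat.card {φ : Fin m → Fin n // ∀ i j, F.Adj i j → G.Adj (φ i) (φ j)}

/-!
Convergence in probability follows by Chebyshev from the first moments alone: `t(F, G)²` is the
density in `G` of the disjoint sum of two copies of `F`, and `t(·, W)` is multiplicative over
disjoint sums.

For the first moment, write `E t(F, G_n)` as an average over all maps `φ` from `V(F)` to the
vertices of `G_n`. When `φ` is injective, distinct edges of `F` read distinct variables `U`, and
integrating these out replaces the edge indicators by the kernel `W` evaluated at the points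
`(θ_{φ(v)}, φ(v))`; the result depends only on the relative order of the vertices `φ(v)`. Cutting
`[0,1]` into `n` cells, a uniform `φ` is the family of cells containing i.i.d. uniform times `t_v`,
and as soon as these times are distinct and `n` is large, the cells are ordered like the times. By
dominated convergence the average therefore converges to the integral over `t` defining `t(F, W)`.
-/

section ProductMeasures

open ProbabilityTheory

variable {ι κ : Type*} [Fintype ι] [Fintype κ]

theorem measurePreserving_pi_comp_injective {X : κ → Type*} [∀ k, MeasurableSpace (X k)]
    (μ : ∀ k, Measure (X k)) [∀ k, IsProbabilityMeasure (μ k)] {g : ι → κ}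
    (hg : Function.Injective g) :
    MeasurePreserving (fun (ω : ∀ k, X k) i => ω (g i)) (Measure.pi μ)
      (Measure.pi fun i => μ (g i)) := by
  have hindep : iIndepFun (fun i (ω : ∀ k, X k) => ω (g i)) (Measure.pi μ) :=
    (iIndepFun_pi fun _ => aemeasurable_id).precomp hg
  refine ⟨by fun_prop, ?_⟩
  rw [hindep.map_fun_eq_pi_map fun i => (measurable_pi_apply (g i)).aemeasurable]
  congr with i : 1
  exact (measurePreserving_eval μ (g i)).map_eq

theorem ae_forall_mem_pi {α : Type*} [MeasurableSpace α] {μ : Measure α}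
    [IsProbabilityMeasure μ] {s : Set α} (hs : ∀ᵐ x ∂μ, x ∈ s) :
    ∀ᵐ x ∂Measure.pi fun _ : ι => μ, ∀ i, x i ∈ s :=
  ae_all_iff.2 fun i => (Measure.quasiMeasurePreserving_eval (fun _ : ι => μ) i).ae hs

theorem measurePreserving_prodMk_eval {X : ι → Type*} [∀ i, MeasurableSpace (X i)]
    (μ : ∀ i, Measure (X i)) [∀ i, IsProbabilityMeasure (μ i)] {i j : ι} (hij : i ≠ j) :
    MeasurePreserving (fun x : ∀ i, X i => (x i, x j)) (Measure.pi μ) ((μ i).prod (μ j)) := by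
  have heval : ∀ k, (Measure.pi μ).map (fun x => x k) = μ k :=
    fun k => (measurePreserving_eval μ k).map_eq
  have hindep : IndepFun (fun x : ∀ i, X i => x i) (fun x => x j) (Measure.pi μ) :=
    (iIndepFun_pi fun _ => aemeasurable_id).indepFun hij
  refine ⟨by fun_prop, ?_⟩
  rw [hindep.map_prod_eq_prod_map_map (measurable_pi_apply i).aemeasurable
    (measurable_pi_apply j).aemeasurable, heval, heval]

theorem ae_fst_ne_snd_prod {α : Type*} [MeasurableSpace α] [MeasurableEq α] (μ ν : Measure α)
    [SFinite ν] [NullSingletonClass ν] : ∀ᵐ p ∂μ.prod ν, p.1 ≠ p.2 :=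
  (Measure.ae_prod_iff_ae_ae measurableSet_diagonal.compl).2 <| ae_of_all _ fun a =>
    (measure_eq_zero_iff_ae_notMem.1 (measure_singleton a)).mono fun _ h => Ne.symm h

theorem ae_injective_pi {α : Type*} [MeasurableSpace α] [MeasurableEq α] (μ : Measure α)
    [IsProbabilityMeasure μ] [NullSingletonClass μ] :
    ∀ᵐ x ∂Measure.pi fun _ : ι => μ, Function.Injective x := by
  refine ae_all_iff.2 fun i => ae_all_iff.2 fun j => ?_
  rcases eq_or_ne i j with rfl | hij
  · exact ae_of_all _ fun _ _ => rfl
  · exact ((measurePreserving_prodMk_eval (fun _ => μ) hij).quasiMeasurePreserving.ae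
      (ae_fst_ne_snd_prod μ μ)).mono fun _ hne heq => absurd heq hne

end ProductMeasures

section SecondMoment

theorem tendsto_measure_abs_sub_ge_of_tendsto_moments {ι : Type*} {l : Filter ι} {Ω : ι → Type*}
    [∀ i, MeasurableSpace (Ω i)] {P : ∀ i, Measure (Ω i)} [∀ i, IsProbabilityMeasure (P i)]
    {X : ∀ i, Ω i → ℝ} {c : ℝ} (hX : ∀ i, MemLp (X i) 2 (P i))
    (hmean : Tendsto (fun i => ∫ ω, X i ω ∂P i) l (nhds c))
    (hsq : Tendsto (fun i => ∫ ω, X i ω ^ 2 ∂P i) l (nhds (c ^ 2))) {ε : ℝ} (hε : 0 < ε) :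
    Tendsto (fun i => P i {ω | ε ≤ |X i ω - c|}) l (nhds 0) := by
  have hexpand : ∀ i, ∫ ω, (X i ω - c) ^ 2 ∂P i =
      ∫ ω, X i ω ^ 2 ∂P i - 2 * c * ∫ ω, X i ω ∂P i + c ^ 2 := by
    intro i
    have hint : Integrable (fun ω => 2 * c * X i ω) (P i) :=
      ((hX i).integrable one_le_two).const_mul _
    have hint' : Integrable (fun ω => X i ω ^ 2 - 2 * c * X i ω) (P i) :=
      (hX i).integrable_sq.sub hint
    calc ∫ ω, (X i ω - c) ^ 2 ∂P i
        = ∫ ω, (X i ω ^ 2 - 2 * c * X i ω + c ^ 2) ∂P i := by congr with ω; ring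
      _ = _ := by
        rw [integral_add hint' (integrable_const _),
          integral_sub (hX i).integrable_sq hint, integral_const_mul]
        simp
  have hvar : Tendsto (fun i => (∫ ω, (X i ω - c) ^ 2 ∂P i) / ε ^ 2) l (nhds 0) := by
    simp only [hexpand]
    convert ((hsq.sub (hmean.const_mul (2 * c))).add_const (c ^ 2)).div_const (ε ^ 2) using 2
    ring
  have hmarkov : ∀ i, (P i).real {ω | ε ≤ |X i ω - c|} ≤ (∫ ω, (X i ω - c) ^ 2 ∂P i) / ε ^ 2 := by
    intro i
    have hset : {ω | ε ≤ |X i ω - c|} = {ω | ε ^ 2 ≤ (X i ω - c) ^ 2} := by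
      ext ω
      simp only [Set.mem_ofPred_eq, sq_le_sq, abs_of_pos hε]
    rw [hset, le_div_iff₀ (by positivity), mul_comm]
    exact mul_meas_ge_le_integral_of_nonneg (ae_of_all _ fun ω => sq_nonneg _)
      ((hX i).sub (memLp_const c)).integrable_sq _
  rw [← ENNReal.tendsto_toReal_iff (by simp) (by simp)]
  exact squeeze_zero (fun _ => measureReal_nonneg) hmarkov hvar

end SecondMoment

section Cells

theorem unif01_eq_restrict_Ico : unif01 = volume.restrict (Set.Ico (0 : ℝ) 1) :=
  (Measure.restrict_congr_set Ico_ae_eq_Icc).symm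

instance : IsProbabilityMeasure unif01 := ⟨by simp [unif01]⟩

instance : NullSingletonClass unif01 := by unfold unif01; infer_instance

theorem ae_mem_Ico_unif01 : ∀ᵐ x ∂unif01, x ∈ Set.Ico (0 : ℝ) 1 := by
  rw [unif01_eq_restrict_Ico]
  exact ae_restrict_mem measurableSet_Ico

theorem unif01_real_Iio {a : ℝ} (ha : a ∈ Set.Icc (0 : ℝ) 1) : unif01.real (Set.Iio a) = a := by
  rw [unif01_eq_restrict_Ico, measureReal_restrict_apply measurableSet_Iio, Set.inter_comm,
    Set.Ico_inter_Iio, min_eq_right ha.2, Real.volume_real_Ico_of_le ha.1, sub_zero]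

/-- The index of the cell `[k/n, (k+1)/n)` containing `t ∈ [0,1)`; outside `[0,1)` the value is
junk. It turns a uniform point of `[0,1]` into a uniform vertex of an `n`-vertex graph. -/
noncomputable def cellIndex (n : ℕ) [NeZero n] (t : ℝ) : Fin n :=
  Fin.ofNat n ⌊n * t⌋₊

theorem measurable_cellIndex (n : ℕ) [NeZero n] : Measurable (cellIndex n) :=
  (measurable_from_top (f := Fin.ofNat n)).comp (Nat.measurable_floor.comp (by fun_prop))

theorem val_cellIndex (n : ℕ) [NeZero n] {t : ℝ} (ht : t ∈ Set.Ico (0 : ℝ) 1) :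
    (cellIndex n t : ℕ) = ⌊n * t⌋₊ := by
  have hn : (0 : ℝ) < n := Nat.cast_pos.2 (NeZero.pos n)
  refine Nat.mod_eq_of_lt ((Nat.floor_lt (mul_nonneg hn.le ht.1)).2 ?_)
  exact mul_lt_of_lt_one_right hn ht.2

theorem cellIndex_eq_iff {n : ℕ} [NeZero n] {t : ℝ} (ht : t ∈ Set.Ico (0 : ℝ) 1) {k : Fin n} :
    cellIndex n t = k ↔ t ∈ Set.Ico ((k : ℝ) / n) ((k + 1) / n) := by
  have hn : (0 : ℝ) < n := Nat.cast_pos.2 (NeZero.pos n)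
  rw [Fin.ext_iff, val_cellIndex n ht, Nat.floor_eq_iff (mul_nonneg hn.le ht.1), Set.mem_Ico,
    div_le_iff₀' hn, lt_div_iff₀' hn]

theorem Ico_div_subset_Ico_zero_one {n : ℕ} (k : Fin n) :
    Set.Ico ((k : ℝ) / n) ((k + 1) / n) ⊆ Set.Ico 0 1 := by
  refine Set.Ico_subset_Ico (by positivity) (div_le_one_of_le₀ ?_ n.cast_nonneg)
  exact_mod_cast k.2

theorem unif01_cellIndex_preimage (n : ℕ) [NeZero n] (k : Fin n) :
    unif01 (cellIndex n ⁻¹' {k}) = ENNReal.ofReal (n : ℝ)⁻¹ := by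
  have hcell : cellIndex n ⁻¹' {k} ∩ Set.Ico 0 1 = Set.Ico ((k : ℝ) / n) ((k + 1) / n) := by
    ext t
    exact ⟨fun h => (cellIndex_eq_iff h.2).1 h.1, fun h =>
      have ht := Ico_div_subset_Ico_zero_one k h
      ⟨(cellIndex_eq_iff ht).2 h, ht⟩⟩
  rw [unif01_eq_restrict_Ico,
    Measure.restrict_apply (measurable_cellIndex n (measurableSet_singleton k)), hcell,
    Real.volume_Ico]
  congr 1
  ring

theorem eventually_cellIndex_lt_cellIndex {s t : ℝ} (hs : s ∈ Set.Ico (0 : ℝ) 1)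
    (ht : t ∈ Set.Ico (0 : ℝ) 1) (hst : s < t) :
    ∀ᶠ n : ℕ in atTop, cellIndex (n + 1) s < cellIndex (n + 1) t := by
  have hgap : ∀ᶠ n : ℕ in atTop, 1 ≤ ((n + 1 : ℕ) : ℝ) * (t - s) :=
    (((tendsto_natCast_atTop_atTop (R := ℝ)).comp (tendsto_add_atTop_nat 1)).atTop_mul_const
      (sub_pos.2 hst)).eventually_ge_atTop 1
  filter_upwards [hgap] with n hn
  have hfloor := Nat.floor_le (mul_nonneg (Nat.cast_nonneg (n + 1)) hs.1)
  rw [Fin.lt_def, val_cellIndex _ hs, val_cellIndex _ ht, Nat.lt_iff_add_one_le,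
    Nat.le_floor_iff (mul_nonneg (Nat.cast_nonneg _) ht.1), Nat.cast_add_one]
  linarith

variable {V : Type*}

theorem eventually_cellIndex_lt_cellIndex_iff [Finite V] {t : V → ℝ}
    (ht : ∀ v, t v ∈ Set.Ico (0 : ℝ) 1) :
    ∀ᶠ n : ℕ in atTop, ∀ v w,
      cellIndex (n + 1) (t v) < cellIndex (n + 1) (t w) ↔ t v < t w := by
  have hmono : ∀ᶠ n : ℕ in atTop, ∀ v w, t v < t w →
      cellIndex (n + 1) (t v) < cellIndex (n + 1) (t w) :=
    eventually_all.2 fun v => eventually_all.2 fun w => eventually_imp_distrib_left.2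
      (eventually_cellIndex_lt_cellIndex (ht v) (ht w))
  filter_upwards [hmono] with n hn v w
  refine ⟨fun hlt => ?_, hn v w⟩
  rcases lt_trichotomy (t v) (t w) with h | h | h
  · exact h
  · exact absurd hlt (by simp [h])
  · exact absurd hlt (hn w v h).not_gt

variable [Fintype V] [DecidableEq V]

theorem integral_comp_cellIndex (n : ℕ) [NeZero n] (g : (V → Fin n) → ℝ) :
    ∫ t : V → ℝ, g (fun v => cellIndex n (t v)) ∂(Measure.pi fun _ => unif01) =
      (∑ φ, g φ) / (n : ℝ) ^ Fintype.card V := by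
  have hmeas : Measurable fun (t : V → ℝ) v => cellIndex n (t v) :=
    measurable_pi_lambda _ fun v => (measurable_cellIndex n).comp (measurable_pi_apply v)
  have : IsProbabilityMeasure (unif01.map (cellIndex n)) :=
    Measure.isProbabilityMeasure_map (measurable_cellIndex n).aemeasurable
  have hlaw : (Measure.pi fun _ : V => unif01).map (fun t v => cellIndex n (t v)) =
      Measure.pi fun _ : V => unif01.map (cellIndex n) :=
    Measure.pi_map_pi fun _ => (measurable_cellIndex n).aemeasurable
  have hatom : ∀ φ : V → Fin n, (Measure.pi fun _ : V => unif01.map (cellIndex n)).real {φ} =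
      ((n : ℝ) ^ Fintype.card V)⁻¹ := by
    intro φ
    simp [measureReal_def, Measure.map_apply (measurable_cellIndex n) (measurableSet_singleton _),
      unif01_cellIndex_preimage]
  rw [← integral_map hmeas.aemeasurable Measurable.of_discrete.aestronglyMeasurable, hlaw,
    integral_fintype .of_finite, Finset.sum_div]
  simp only [hatom, smul_eq_mul, inv_mul_eq_div]

theorem tendsto_average_of_tendsto_cellIndex {g : ∀ n, (V → Fin (n + 1)) → ℝ} {C : ℝ}
    (hg : ∀ n φ, |g n φ| ≤ C) {f : (V → ℝ) → ℝ}
    (hgf : ∀ᵐ t ∂Measure.pi fun _ : V => unif01,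
      Tendsto (fun n => g n fun v => cellIndex (n + 1) (t v)) atTop (nhds (f t))) :
    Tendsto (fun n => (∑ φ, g n φ) / ((n + 1 : ℕ) : ℝ) ^ Fintype.card V) atTop
      (nhds (∫ t, f t ∂(Measure.pi fun _ => unif01))) := by
  simp only [← integral_comp_cellIndex]
  refine tendsto_integral_of_dominated_convergence (fun _ => C) (fun n => ?_)
    (integrable_const C) (fun n => ae_of_all _ fun t => hg n _) hgf
  exact (Measurable.of_discrete.comp (measurable_pi_lambda _ fun v =>
    (measurable_cellIndex _).comp (measurable_pi_apply v))).aestronglyMeasurable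

end Cells

section HomDensity

variable {V V' α : Type*}

/-- The product `∏_{{i,j} ∈ E(F)} K(x_i, x_j)` over the edges of `F`. A symmetric kernel on `α` is
encoded as a function `K` on unordered pairs, so that no orientation of the edges is needed. -/
def edgeSetProd (F : SimpleGraph V) [Fintype F.edgeSet] (K : Sym2 α → ℝ) (x : V → α) : ℝ :=
  ∏ e : F.edgeSet, K ((e : Sym2 V).map x)

theorem edgeSetProd_mem_Icc {F : SimpleGraph V} [Fintype F.edgeSet] {K : Sym2 α → ℝ} {x : V → α}
    (hK : ∀ e : F.edgeSet, K ((e : Sym2 V).map x) ∈ Set.Icc 0 1) :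
    edgeSetProd F K x ∈ Set.Icc 0 1 :=
  ⟨Finset.prod_nonneg fun e _ => (hK e).1,
    Finset.prod_le_one (fun e _ => (hK e).1) fun e _ => (hK e).2⟩

theorem edgeSetProd_indicator_mem_Icc (F : SimpleGraph V) [Fintype F.edgeSet] (s : Set (Sym2 α))
    (x : V → α) : edgeSetProd F (s.indicator 1) x ∈ Set.Icc 0 1 :=
  edgeSetProd_mem_Icc fun e =>
    ⟨Set.indicator_nonneg (by simp) _, Set.indicator_le_self' (by simp) _⟩

theorem edgeSetProd_sum (F : SimpleGraph V) (H : SimpleGraph V') [Fintype F.edgeSet]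
    [Fintype H.edgeSet] [Fintype (F ⊕g H).edgeSet] (K : Sym2 α → ℝ) (x : V ⊕ V' → α) :
    edgeSetProd (F ⊕g H) K x = edgeSetProd F K (x ∘ Sum.inl) * edgeSetProd H K (x ∘ Sum.inr) := by
  unfold edgeSetProd
  rw [← SimpleGraph.edgeSetSumEquiv.symm.prod_comp, Fintype.prod_sum_type]
  congr 1 <;>
  · refine Finset.prod_congr rfl fun ⟨e, he⟩ _ => ?_
    induction e with
    | _ v w => rfl

theorem edgeProd_eq_edgeSetProd {m : ℕ} (F : SimpleGraph (Fin m)) [DecidableRel F.Adj]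
    {W : α → α → ℝ} (hW : ∀ a b, W a b = W b a) (x : Fin m → α) :
    edgeProd F W x = edgeSetProd F (Sym2.lift ⟨W, hW⟩) x := by
  rw [edgeSetProd, ← Finset.prod_subtype F.edgeFinset (by simp)
    fun e => Sym2.lift ⟨W, hW⟩ (e.map x)]
  refine Finset.prod_nbij' (fun p => s(p.1, p.2)) (fun e => (e.inf, e.sup)) ?_ ?_ ?_ ?_ ?_
  · simp
  · intro e he
    induction e with
    | _ v w =>
      have hvw : F.Adj v w := by simpa using he
      rcases hvw.ne.lt_or_gt with h | h <;> simp [h, h.le, hvw, hvw.symm]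
  · simp +contextual [le_of_lt]
  · intro e _
    induction e with
    | _ v w => rcases le_total v w with h | h <;> simp [h, Sym2.eq_swap]
  · simp

/-- The homomorphism density `t(F, K)` of `F` in the symmetric kernel `K` on `(α, μ)`. -/
noncomputable def kernelDensity [Fintype V] [MeasurableSpace α] (F : SimpleGraph V)
    [Fintype F.edgeSet] (K : Sym2 α → ℝ) (μ : Measure α) : ℝ :=
  ∫ x : V → α, edgeSetProd F K x ∂(Measure.pi fun _ => μ)

theorem kernelDensity_sum [Fintype V] [Fintype V'] [MeasurableSpace α] (F : SimpleGraph V)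
    (H : SimpleGraph V') [Fintype F.edgeSet] [Fintype H.edgeSet] [Fintype (F ⊕g H).edgeSet]
    (K : Sym2 α → ℝ) (μ : Measure α) [SigmaFinite μ] :
    kernelDensity (F ⊕g H) K μ = kernelDensity F K μ * kernelDensity H K μ := by
  unfold kernelDensity
  rw [← integral_prod_mul, ← (measurePreserving_sumPiEquivProdPi fun _ => μ).integral_comp']
  simp only [edgeSetProd_sum]
  rfl

/-- The homomorphism density `t(F, G) = n(F, G) / |V(G)| ^ |V(F)|` of `F` in the graph `G`. -/
noncomputable def homDensity {β : Type*} [Fintype V] [Fintype β] (F : SimpleGraph V)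
    (G : SimpleGraph β) : ℝ :=
  Nat.card (F →g G) / (Fintype.card β : ℝ) ^ Fintype.card V

variable {β : Type*}

/-- A homomorphism from a disjoint sum is a pair of homomorphisms from the summands. -/
def sumHomEquiv (F : SimpleGraph V) (H : SimpleGraph V') (G : SimpleGraph β) :
    (F ⊕g H →g G) ≃ (F →g G) × (H →g G) where
  toFun φ := (φ.comp SimpleGraph.Embedding.sumInl.toHom, φ.comp SimpleGraph.Embedding.sumInr.toHom)
  invFun p := ⟨Sum.elim p.1 p.2, by
    rintro (v | v) (w | w) h
    exacts [p.1.map_adj h, absurd h (by simp), absurd h (by simp), p.2.map_adj h]⟩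
  left_inv φ := by ext (v | v) <;> rfl
  right_inv p := rfl

theorem homDensity_sum [Fintype V] [Fintype V'] [Fintype β] (F : SimpleGraph V) (H : SimpleGraph V')
    (G : SimpleGraph β) : homDensity (F ⊕g H) G = homDensity F G * homDensity H G := by
  rw [homDensity, homDensity, homDensity, Nat.card_congr (sumHomEquiv F H G), Nat.card_prod,
    Fintype.card_sum, pow_add, Nat.cast_mul, mul_div_mul_comm]

theorem edgeSetProd_indicator_edgeSet (F : SimpleGraph V) [Fintype F.edgeSet] (G : SimpleGraph β)
    (φ : V → β) :
    edgeSetProd F (G.edgeSet.indicator 1) φ =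
      (Set.range ((⇑) : (F →g G) → V → β)).indicator 1 φ := by
  by_cases h : φ ∈ Set.range ((⇑) : (F →g G) → V → β)
  · obtain ⟨ψ, rfl⟩ := h
    rw [Set.indicator_of_mem (Set.mem_range_self ψ)]
    exact Finset.prod_eq_one fun e _ => Set.indicator_of_mem (ψ.mapEdgeSet e).2 _
  · rw [Set.indicator_of_notMem h]
    by_contra! hne
    refine h ⟨⟨φ, fun {v w} hvw => ?_⟩, rfl⟩
    have hedge := Finset.prod_ne_zero_iff.1 hne ⟨s(v, w), hvw⟩ (Finset.mem_univ _)
    exact G.mem_edgeSet.1 (Set.mem_of_indicator_ne_zero hedge)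

variable [Fintype V] [Fintype β]

theorem homDensity_eq_sum [DecidableEq V] (F : SimpleGraph V) [Fintype F.edgeSet]
    (G : SimpleGraph β) :
    homDensity F G = (∑ φ : V → β, edgeSetProd F (G.edgeSet.indicator 1) φ) /
      (Fintype.card β : ℝ) ^ Fintype.card V := by
  classical
  have hcard : Nat.card (F →g G) = Nat.card (Set.range ((⇑) : (F →g G) → V → β)) :=
    (Nat.card_range_of_injective DFunLike.coe_injective).symm
  simp only [homDensity, hcard, edgeSetProd_indicator_edgeSet, Set.indicator_apply, Pi.one_apply,
    Finset.sum_boole, Nat.card_eq_fintype_card, Fintype.card_subtype]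

theorem homDensity_mem_Icc (F : SimpleGraph V) (G : SimpleGraph β) :
    homDensity F G ∈ Set.Icc 0 1 := by
  refine ⟨by unfold homDensity; positivity, div_le_one_of_le₀ ?_ (by positivity)⟩
  have hle : Nat.card (F →g G) ≤ Nat.card (V → β) :=
    Nat.card_le_card_of_injective _ DFunLike.coe_injective
  rw [Nat.card_fun, Nat.card_eq_fintype_card (α := V), Nat.card_eq_fintype_card (α := β)] at hle
  exact_mod_cast hle

theorem homCount_div_eq_homDensity {m n : ℕ} (F : SimpleGraph (Fin m)) (G : SimpleGraph (Fin n)) :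
    (homCount F G : ℝ) / (n : ℝ) ^ m = homDensity F G := by
  have hcard : homCount F G = Nat.card (F →g G) :=
    Nat.card_congr ⟨fun φ => ⟨φ.1, fun h => φ.2 _ _ h⟩, fun φ => ⟨φ, fun _ _ h => φ.map_adj h⟩,
      fun _ => rfl, fun _ => rfl⟩
  rw [homDensity, hcard, Fintype.card_fin, Fintype.card_fin]

end HomDensity

section ConstructionTwo

open ProbabilityTheory

theorem Wker_comm (x y : ℝ × ℝ) : Wker x y = Wker y x := by
  rcases lt_trichotomy x.2 y.2 with h | h | h <;> simp [Wker, h, h.not_gt]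

theorem measurable_Wker : Measurable fun p : (ℝ × ℝ) × (ℝ × ℝ) => Wker p.1 p.2 :=
  Measurable.ite (measurableSet_lt (by fun_prop) (by fun_prop)) (by fun_prop)
    (Measurable.ite (measurableSet_lt (by fun_prop) (by fun_prop)) (by fun_prop) measurable_const)

theorem Wker_mem_Icc {x y : ℝ × ℝ} (hx : x.1 ∈ Set.Icc 0 1) (hy : y.1 ∈ Set.Icc 0 1) :
    Wker x y ∈ Set.Icc 0 1 := by
  unfold Wker
  split_ifs
  exacts [hy, hx, Set.left_mem_Icc.2 zero_le_one]

/-- The kernel `W` as a function on unordered pairs of points of `S`. -/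
noncomputable def sym2Wker : Sym2 (ℝ × ℝ) → ℝ := Sym2.lift ⟨Wker, Wker_comm⟩

theorem sym2Wker_map_prodMk_val {n : ℕ} (θ : Fin n → ℝ) {e : Sym2 (Fin n)} (he : ¬ e.IsDiag) :
    sym2Wker (e.map fun k => (θ k, ((k : ℕ) : ℝ))) = θ e.sup := by
  induction e with
  | _ i j =>
    rcases Ne.lt_or_gt he with h | h <;> simp [sym2Wker, Wker, h, h.le, h.not_gt]

theorem mem_edgeSet_con2Graph {n : ℕ} (ω : (Fin n → ℝ) × (Fin n × Fin n → ℝ))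
    {e : Sym2 (Fin n)} (he : ¬ e.IsDiag) :
    e ∈ (con2Graph ω).edgeSet ↔ ω.2 (e.inf, e.sup) < ω.1 e.sup := by
  induction e with
  | _ i j =>
    rcases Ne.lt_or_gt he with h | h <;> simp [con2Graph, h, h.le, h.not_gt]

instance (ν : Measure ℝ) [IsProbabilityMeasure ν] : IsProbabilityMeasure (muNu ν) := by
  unfold muNu; infer_instance

instance (n : ℕ) (ν : Measure ℝ) [IsProbabilityMeasure ν] :
    IsProbabilityMeasure (con2Measure n ν) := by
  unfold con2Measure; infer_instance

variable {V : Type*} (F : SimpleGraph V) [Fintype F.edgeSet]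

theorem edgeSetProd_sym2Wker_mem_Icc {x : V → ℝ × ℝ} (hx : ∀ v, (x v).1 ∈ Set.Icc 0 1) :
    edgeSetProd F sym2Wker x ∈ Set.Icc 0 1 := by
  refine edgeSetProd_mem_Icc fun ⟨e, _⟩ => ?_
  induction e with
  | _ v w => exact Wker_mem_Icc (hx v) (hx w)

theorem measurable_edgeSetProd_sym2Wker : Measurable (edgeSetProd F sym2Wker) := by
  refine Finset.measurable_fun_prod _ fun ⟨e, _⟩ _ => ?_
  induction e with
  | _ v w =>
    exact measurable_Wker.comp ((measurable_pi_apply v).prodMk (measurable_pi_apply w))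

theorem edgeSetProd_sym2Wker_congr {s t t' : V → ℝ} (h : ∀ v w, t v < t w ↔ t' v < t' w) :
    edgeSetProd F sym2Wker (fun v => (s v, t v)) =
      edgeSetProd F sym2Wker fun v => (s v, t' v) := by
  refine Finset.prod_congr rfl fun ⟨e, _⟩ _ => ?_
  induction e with
  | _ v w => simp [sym2Wker, Wker, h]

theorem measurable_edgeSetProd_con2Graph {n : ℕ} (φ : V → Fin n) :
    Measurable fun ω : (Fin n → ℝ) × (Fin n × Fin n → ℝ) =>
      edgeSetProd F ((con2Graph ω).edgeSet.indicator 1) φ := by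
  classical
  refine Finset.measurable_fun_prod _ fun e _ => ?_
  by_cases he : ((e : Sym2 V).map φ).IsDiag
  · have hne : ∀ ω, (e : Sym2 V).map φ ∉ (con2Graph ω).edgeSet :=
      fun ω hmem => SimpleGraph.not_isDiag_of_mem_edgeSet _ hmem he
    simp only [hne, not_false_eq_true, Set.indicator_of_notMem, measurable_const]
  · simp only [Set.indicator_apply, mem_edgeSet_con2Graph _ he, Pi.one_apply]
    exact Measurable.ite (measurableSet_lt (by fun_prop) (by fun_prop)) measurable_const
      measurable_const

theorem integral_edgeSetProd_con2Graph_of_weights {n : ℕ} {φ : V → Fin n}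
    (hφ : Function.Injective φ) {θ : Fin n → ℝ} (hθ : ∀ k, θ k ∈ Set.Icc 0 1) :
    ∫ u, edgeSetProd F ((con2Graph (θ, u)).edgeSet.indicator 1) φ ∂(Measure.pi fun _ => unif01) =
      edgeSetProd F sym2Wker fun v => (θ (φ v), ((φ v : ℕ) : ℝ)) := by
  have hdiag : ∀ e : F.edgeSet, ¬ ((e : Sym2 V).map φ).IsDiag := fun e =>
    (Sym2.isDiag_map hφ).not.2 (F.not_isDiag_of_mem_edgeSet e.2)
  have hendpoints : Function.Injective fun e : F.edgeSet =>
      (((e : Sym2 V).map φ).inf, ((e : Sym2 V).map φ).sup) := fun e e' h =>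
    Subtype.ext (Sym2.map.injective hφ (Sym2.inf_eq_inf_and_sup_eq_sup.1 (Prod.ext_iff.1 h)))
  have hindep : iIndepFun
      (fun (e : F.edgeSet) (u : Fin n × Fin n → ℝ) =>
        u (((e : Sym2 V).map φ).inf, ((e : Sym2 V).map φ).sup))
      (Measure.pi fun _ => unif01) :=
    (iIndepFun_pi fun _ => aemeasurable_id).precomp hendpoints
  have hedge : ∀ (e : F.edgeSet) (u : Fin n × Fin n → ℝ),
      (con2Graph (θ, u)).edgeSet.indicator (1 : Sym2 (Fin n) → ℝ) ((e : Sym2 V).map φ) =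
        (Set.Iio (θ ((e : Sym2 V).map φ).sup)).indicator 1
          (u (((e : Sym2 V).map φ).inf, ((e : Sym2 V).map φ).sup)) := by
    classical
    intro e u
    simp only [Set.indicator_apply, mem_edgeSet_con2Graph _ (hdiag e), Set.mem_Iio, Pi.one_apply]
  unfold edgeSetProd
  simp only [hedge]
  rw [hindep.integral_fun_prod_comp (fun e => (measurable_pi_apply _).aemeasurable) fun e =>
    (measurable_one.indicator measurableSet_Iio).aestronglyMeasurable]
  refine Finset.prod_congr rfl fun e _ => ?_
  rw [integral_comp_eval (measurable_one.indicator measurableSet_Iio).aestronglyMeasurable,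
    integral_indicator_one measurableSet_Iio, unif01_real_Iio (hθ _),
    ← sym2Wker_map_prodMk_val θ (hdiag e), Sym2.map_map, Function.comp_def]

theorem integrable_edgeSetProd_con2Graph {n : ℕ} (ν : Measure ℝ) [IsProbabilityMeasure ν]
    (φ : V → Fin n) :
    Integrable (fun ω => edgeSetProd F ((con2Graph ω).edgeSet.indicator 1) φ)
      (con2Measure n ν) :=
  .of_mem_Icc 0 1 (measurable_edgeSetProd_con2Graph F φ).aemeasurable
    (ae_of_all _ fun _ => edgeSetProd_indicator_mem_Icc F _ φ)

variable [Fintype V]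

omit [Fintype F.edgeSet] in
theorem measurable_homDensity_con2Graph (n : ℕ) :
    Measurable fun ω : (Fin n → ℝ) × (Fin n × Fin n → ℝ) => homDensity F (con2Graph ω) := by
  classical
  have := Fintype.ofFinite F.edgeSet
  simp only [homDensity_eq_sum]
  exact (Finset.measurable_fun_sum _ fun φ _ => measurable_edgeSetProd_con2Graph F φ).div_const _

variable (ν : Measure ℝ)

/-- The conditional expectation of `∏_{{v,w} ∈ E(F)} W((s_v,t_v),(s_w,t_w))` given the time
coordinates `t`, the weights `s` being i.i.d. with law `ν`. It depends on `t` only through the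
relative order of its entries. -/
noncomputable def orderedDensity (t : V → ℝ) : ℝ :=
  ∫ s : V → ℝ, edgeSetProd F sym2Wker (fun v => (s v, t v)) ∂(Measure.pi fun _ => ν)

theorem orderedDensity_congr {t t' : V → ℝ} (h : ∀ v w, t v < t w ↔ t' v < t' w) :
    orderedDensity F ν t = orderedDensity F ν t' := by
  simp only [orderedDensity, edgeSetProd_sym2Wker_congr F h]

variable {ν} [IsProbabilityMeasure ν] (hν : ∀ᵐ x ∂ν, x ∈ Set.Icc 0 1)
include hν

theorem kernelDensity_sym2Wker_muNu :
    kernelDensity F sym2Wker (muNu ν) =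
      ∫ t, orderedDensity F ν t ∂(Measure.pi fun _ : V => unif01) := by
  have hsplit := measurePreserving_arrowProdEquivProdArrow ℝ ℝ V (fun _ => ν) fun _ => unif01
  have hint : Integrable (fun p : (V → ℝ) × (V → ℝ) =>
      edgeSetProd F sym2Wker fun v => (p.1 v, p.2 v))
      ((Measure.pi fun _ => ν).prod (Measure.pi fun _ => unif01)) := by
    refine .of_mem_Icc 0 1 ((measurable_edgeSetProd_sym2Wker F).comp (by fun_prop)).aemeasurable ?_
    filter_upwards [Measure.quasiMeasurePreserving_fst.ae (ae_forall_mem_pi hν)] with p hp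
    exact edgeSetProd_sym2Wker_mem_Icc F hp
  calc kernelDensity F sym2Wker (muNu ν)
      = ∫ p : (V → ℝ) × (V → ℝ), edgeSetProd F sym2Wker (fun v => (p.1 v, p.2 v))
          ∂(Measure.pi fun _ => ν).prod (Measure.pi fun _ => unif01) :=
        hsplit.integral_comp' fun p : (V → ℝ) × (V → ℝ) =>
          edgeSetProd F sym2Wker fun v => (p.1 v, p.2 v)
    _ = ∫ t, orderedDensity F ν t ∂(Measure.pi fun _ : V => unif01) := integral_prod_symm _ hint

theorem integral_edgeSetProd_con2Graph {n : ℕ} {φ : V → Fin n} (hφ : Function.Injective φ) :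
    ∫ ω, edgeSetProd F ((con2Graph ω).edgeSet.indicator 1) φ ∂con2Measure n ν =
      orderedDensity F ν fun v => ((φ v : ℕ) : ℝ) := by
  have hproj := measurePreserving_pi_comp_injective (fun _ : Fin n => ν) hφ
  have hmeas : Measurable fun s : V → ℝ =>
      edgeSetProd F sym2Wker fun v => (s v, ((φ v : ℕ) : ℝ)) :=
    (measurable_edgeSetProd_sym2Wker F).comp (by fun_prop)
  calc ∫ ω, edgeSetProd F ((con2Graph ω).edgeSet.indicator 1) φ ∂con2Measure n ν
      = ∫ θ, ∫ u, edgeSetProd F ((con2Graph (θ, u)).edgeSet.indicator 1) φ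
          ∂(Measure.pi fun _ => unif01) ∂(Measure.pi fun _ => ν) :=
        integral_prod _ (integrable_edgeSetProd_con2Graph F ν φ)
    _ = ∫ θ : Fin n → ℝ, edgeSetProd F sym2Wker (fun v => (θ (φ v), ((φ v : ℕ) : ℝ)))
          ∂(Measure.pi fun _ => ν) :=
        integral_congr_ae <| (ae_forall_mem_pi hν).mono fun θ hθ =>
          integral_edgeSetProd_con2Graph_of_weights F hφ hθ
    _ = orderedDensity F ν fun v => ((φ v : ℕ) : ℝ) := by
        rw [orderedDensity, ← hproj.map_eq,
          integral_map hproj.aemeasurable hmeas.aestronglyMeasurable]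

theorem tendsto_integral_edgeSetProd_cellIndex {t : V → ℝ} (hinj : Function.Injective t)
    (ht : ∀ v, t v ∈ Set.Ico (0 : ℝ) 1) :
    Tendsto (fun n => ∫ ω, edgeSetProd F ((con2Graph ω).edgeSet.indicator 1)
      (fun v => cellIndex (n + 1) (t v)) ∂con2Measure (n + 1) ν) atTop
      (nhds (orderedDensity F ν t)) := by
  refine tendsto_const_nhds.congr' ?_
  filter_upwards [eventually_cellIndex_lt_cellIndex_iff ht] with n hn
  have hcell : Function.Injective fun v => cellIndex (n + 1) (t v) := by
    intro v w (hvw : cellIndex (n + 1) (t v) = cellIndex (n + 1) (t w))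
    refine hinj (le_antisymm ?_ ?_) <;> rw [← not_lt, ← hn, hvw] <;> exact lt_irrefl _
  rw [integral_edgeSetProd_con2Graph F hν hcell]
  exact orderedDensity_congr F ν fun v w => by simp [← hn]

theorem tendsto_integral_homDensity_con2Graph :
    Tendsto (fun n => ∫ ω, homDensity F (con2Graph ω) ∂con2Measure n ν) atTop
      (nhds (kernelDensity F sym2Wker (muNu ν))) := by
  classical
  have hmean : ∀ n, ∫ ω, homDensity F (con2Graph ω) ∂con2Measure n ν =
      (∑ φ : V → Fin n, ∫ ω, edgeSetProd F ((con2Graph ω).edgeSet.indicator 1) φ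
        ∂con2Measure n ν) / (n : ℝ) ^ Fintype.card V := by
    intro n
    simp only [homDensity_eq_sum, integral_div, Fintype.card_fin]
    rw [integral_finsetSum _ fun φ _ => integrable_edgeSetProd_con2Graph F ν φ]
  rw [← tendsto_add_atTop_iff_nat 1, kernelDensity_sym2Wker_muNu F hν]
  simp only [hmean]
  refine tendsto_average_of_tendsto_cellIndex (C := 1) (fun n φ => ?_) ?_
  · have hmem := (convex_Icc (0 : ℝ) 1).integral_mem isClosed_Icc
      (ae_of_all _ fun ω => edgeSetProd_indicator_mem_Icc F (con2Graph ω).edgeSet φ)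
      (integrable_edgeSetProd_con2Graph F ν φ)
    rw [abs_of_nonneg hmem.1]
    exact hmem.2
  · filter_upwards [ae_injective_pi unif01, ae_forall_mem_pi ae_mem_Ico_unif01] with t hinj ht
    exact tendsto_integral_edgeSetProd_cellIndex F hν hinj ht

theorem tendsto_integral_sq_homDensity_con2Graph :
    Tendsto (fun n => ∫ ω, homDensity F (con2Graph ω) ^ 2 ∂con2Measure n ν) atTop
      (nhds (kernelDensity F sym2Wker (muNu ν) ^ 2)) := by
  let := Fintype.ofEquiv _ (SimpleGraph.edgeSetSumEquiv (G := F) (H := F)).symm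
  simpa only [sq, homDensity_sum, kernelDensity_sum] using
    tendsto_integral_homDensity_con2Graph (F ⊕g F) hν

theorem tendsto_measure_abs_homDensity_con2Graph_sub_ge {ε : ℝ} (hε : 0 < ε) :
    Tendsto (fun n => con2Measure n ν
      {ω | ε ≤ |homDensity F (con2Graph ω) - kernelDensity F sym2Wker (muNu ν)|})
      atTop (nhds 0) := by
  refine tendsto_measure_abs_sub_ge_of_tendsto_moments (fun n => ?_)
    (tendsto_integral_homDensity_con2Graph F hν) (tendsto_integral_sq_homDensity_con2Graph F hν) hε
  exact memLp_of_bounded (ae_of_all _ fun ω => homDensity_mem_Icc F (con2Graph ω))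
    (measurable_homDensity_con2Graph F n).aestronglyMeasurable 2

end ConstructionTwo

/-- For the Construction 2 graphs `G_n` built from a probability measure
`ν` on `[0,1]`, and every finite simple graph `F` on `{1,…,m}`,
`t(F, G_n) → t(F,W)` in probability, where `t(F,G) = n(F,G)/n^m` and
`t(F,W) = ∫_{S^m} ∏_{{i,j}∈E(F)} W(x_i,x_j) dμ_ν^m`. -/
theorem stmt11 (ν : Measure ℝ) [IsProbabilityMeasure ν] (hν : ν (Set.Icc 0 1) = 1)
    (m : ℕ) (F : SimpleGraph (Fin m)) [DecidableRel F.Adj] :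
    ∀ ε > (0 : ℝ), Tendsto
      (fun n => con2Measure n ν
        {ω | ε ≤ |(homCount F (con2Graph ω) : ℝ) / (n : ℝ) ^ m -
          ∫ x : Fin m → ℝ × ℝ, edgeProd F Wker x ∂(Measure.pi fun _ : Fin m => muNu ν)|})
      atTop (nhds 0) := by
  intro ε hε
  have hν' : ∀ᵐ x ∂ν, x ∈ Set.Icc 0 1 := (mem_ae_iff_prob_eq_one measurableSet_Icc).2 hν
  simp only [homCount_div_eq_homDensity, edgeProd_eq_edgeSetProd F Wker_comm]
  exact tendsto_measure_abs_homDensity_con2Graph_sub_ge F hν' hε
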